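/- For every t > 0 and every x ∈ X, the total outgoing reverse rate satisfies ∑_{j : Fin d, x j = m} ∑_{b : Fin S, b ≠ m} q_t (x[j ↦ b]) ≤ m̄(x) · (exp(−t)/(1 − exp(−t))) · q_t x, where m̄(x) is the number of coordinates i with x i = m. In particular, since exp(−t)/(1 − exp(−t)) ≤ 1/t, the left-hand side is at most (m̄(x)/t) · q_t x. -/

import Mathlib

open Finset

/-- Per-token absorbing transition kernel. -/
noncomputable def absK (S : ℕ) (m : Fin S) (t : ℝ) (a b : Fin S) : ℝ :=
  if a = b then (if a = m then 1 else Real.exp (-t))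
  else (if b = m then 1 - Real.exp (-t) else 0)

/-- Forward marginal at time `t` of the absorbing diffusion started at `q0`. -/
noncomputable def fwd (S d : ℕ) (m : Fin S) (q0 : (Fin d → Fin S) → ℝ) (t : ℝ)
    (x : Fin d → Fin S) : ℝ :=
  ∑ x0 : Fin d → Fin S, q0 x0 * ∏ i : Fin d, absK S m t (x0 i) (x i)

/-- Number of masked coordinates. -/
def nmask (S d : ℕ) (m : Fin S) (x : Fin d → Fin S) : ℕ :=
  (Finset.univ.filter (fun i => x i = m)).card

/-!
Moving a masked coordinate `j` of `x` to a token `b` changes only the `j`-th factor of each product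
`∏ i, P_t (x0 i) (x i)`, so it suffices to compare single-token weights: with `c` either
`e^{-t} / (1 - e^{-t})` or `1 / t`, one needs `∑ b ≠ m, P_t a b ≤ c * P_t a m` for every `a`.
A token `a ≠ m` survives with probability `e^{-t}` and is masked with probability `1 - e^{-t}`,
while for `a = m` the left-hand side vanishes.
-/

section ProductMarginal

variable {ι α β R : Type*} [Fintype ι] [DecidableEq ι] [Fintype α] [CommSemiring R]

/-- The weight at `y` of the measure `q0` on `ι → α` after each coordinate `i` has been moved
independently by its own kernel `K i`, where `q0` and the `K i` are arbitrary weight functions.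
It is the common form of `fwd` for all noise processes acting separately on the coordinates. -/
def productMarginal (K : ι → α → β → R) (q0 : (ι → α) → R) (y : ι → β) : R :=
  ∑ x0 : ι → α, q0 x0 * ∏ i, K i (x0 i) (y i)

lemma productMarginal_update (K : ι → α → β → R) (q0 : (ι → α) → R) (y : ι → β) (j : ι) (b : β) :
    productMarginal K q0 (Function.update y j b) =
      ∑ x0 : ι → α, q0 x0 * (K j (x0 j) b * ∏ i ∈ univ \ {j}, K i (x0 i) (y i)) := by
  refine sum_congr rfl fun x0 _ => ?_
  simp only [Function.apply_update fun i => K i (x0 i), prod_update_of_mem (mem_univ j)]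

variable [PartialOrder R] [IsOrderedRing R]

lemma sum_productMarginal_update_le {K : ι → α → β → R} (hK : ∀ i a b, 0 ≤ K i a b)
    {q0 : (ι → α) → R} (hq0 : ∀ x, 0 ≤ q0 x) {y : ι → β} {j : ι} {s : Finset β} {c : R}
    (hc : ∀ a, ∑ b ∈ s, K j a b ≤ c * K j a (y j)) :
    ∑ b ∈ s, productMarginal K q0 (Function.update y j b) ≤ c * productMarginal K q0 y := by
  let others (x0 : ι → α) : R := ∏ i ∈ univ \ {j}, K i (x0 i) (y i)
  have others_nonneg (x0 : ι → α) : 0 ≤ others x0 := prod_nonneg fun i _ => hK i _ _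
  calc ∑ b ∈ s, productMarginal K q0 (Function.update y j b)
      = ∑ x0, q0 x0 * ((∑ b ∈ s, K j (x0 j) b) * others x0) := by
        simp only [productMarginal_update, sum_mul, mul_sum, others]
        exact sum_comm
    _ ≤ ∑ x0, q0 x0 * (c * K j (x0 j) (y j) * others x0) :=
        sum_le_sum fun x0 _ => mul_le_mul_of_nonneg_left
          (mul_le_mul_of_nonneg_right (hc _) (others_nonneg x0)) (hq0 x0)
    _ = c * productMarginal K q0 (Function.update y j (y j)) := by
        rw [productMarginal_update, mul_sum]
        exact sum_congr rfl fun x0 _ => by ring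
    _ = c * productMarginal K q0 y := by rw [Function.update_eq_self]

theorem absorbing_total_reverse_rate_bound_general [Fintype β] [DecidableEq β]
    {K : ι → α → β → R} (hK : ∀ i a b, 0 ≤ K i a b) {q0 : (ι → α) → R} (hq0 : ∀ x, 0 ≤ q0 x)
    {m : β} {c : R} (hc : ∀ i a, ∑ b with b ≠ m, K i a b ≤ c * K i a m) (x : ι → β) :
    ∑ j with x j = m, ∑ b with b ≠ m, productMarginal K q0 (Function.update x j b) ≤
      #{i | x i = m} * c * productMarginal K q0 x := by
  rw [mul_assoc, ← nsmul_eq_mul]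
  refine sum_le_card_nsmul _ _ _ fun j hj => sum_productMarginal_update_le hK hq0 fun a => ?_
  rw [(mem_filter.mp hj).2]
  exact hc j a

end ProductMarginal

section AbsorbingKernel

variable {S : ℕ} {m : Fin S} {t : ℝ}

lemma absK_nonneg (ht : 0 ≤ t) (a b : Fin S) : 0 ≤ absK S m t a b := by
  have survival_nonneg : 0 ≤ Real.exp (-t) := (Real.exp_pos _).le
  have masking_nonneg : 0 ≤ 1 - Real.exp (-t) :=
    sub_nonneg.mpr (Real.exp_le_one_iff.mpr (neg_nonpos.mpr ht))
  unfold absK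
  split_ifs <;> first | assumption | norm_num

lemma sum_absK_of_ne_mask (m : Fin S) (t : ℝ) (a : Fin S) :
    ∑ b with b ≠ m, absK S m t a b = if a = m then 0 else Real.exp (-t) := by
  have absK_off_mask : ∀ b ∈ univ.filter (· ≠ m),
      absK S m t a b = if a = b then Real.exp (-t) else 0 := by
    intro b hb
    have hbm : b ≠ m := (mem_filter.mp hb).2
    by_cases hab : a = b <;> simp [absK, hab, hbm]
  rw [sum_congr rfl absK_off_mask, sum_ite_eq]
  simp

lemma sum_absK_le_mul_absK_mask (ht : 0 < t) (a : Fin S) :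
    ∑ b with b ≠ m, absK S m t a b ≤
      Real.exp (-t) / (1 - Real.exp (-t)) * absK S m t a m := by
  have masking_pos : 0 < 1 - Real.exp (-t) :=
    sub_pos.mpr (Real.exp_lt_one_iff.mpr (neg_lt_zero.mpr ht))
  rw [sum_absK_of_ne_mask]
  by_cases ha : a = m
  · simpa [absK, ha] using div_nonneg (Real.exp_pos _).le masking_pos.le
  · simp [absK, ha, div_mul_cancel₀ _ masking_pos.ne']

lemma exp_neg_div_one_sub_exp_neg_le_inv (ht : 0 < t) :
    Real.exp (-t) / (1 - Real.exp (-t)) ≤ t⁻¹ := by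
  have le_exp_sub_one : t ≤ Real.exp t - 1 := le_sub_iff_add_le.mpr (Real.add_one_le_exp t)
  calc Real.exp (-t) / (1 - Real.exp (-t))
      = (Real.exp t - 1)⁻¹ := by
        rw [Real.exp_neg]
        field_simp
    _ ≤ t⁻¹ := inv_anti₀ ht le_exp_sub_one

lemma sum_absK_le_inv_mul_absK_mask (ht : 0 < t) (a : Fin S) :
    ∑ b with b ≠ m, absK S m t a b ≤ t⁻¹ * absK S m t a m :=
  (sum_absK_le_mul_absK_mask ht a).trans <|
    mul_le_mul_of_nonneg_right (exp_neg_div_one_sub_exp_neg_le_inv ht) (absK_nonneg ht.le a m)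

lemma fwd_eq_productMarginal (S d : ℕ) (m : Fin S) (q0 : (Fin d → Fin S) → ℝ) (t : ℝ) :
    fwd S d m q0 t = productMarginal (fun _ => absK S m t) q0 :=
  rfl

end AbsorbingKernel

/-- The total outgoing reverse rate at `x` is at most
`m̄(x) · e^{-t}/(1 - e^{-t}) · q_t(x) ≤ (m̄(x)/t) · q_t(x)`. -/
theorem absorbing_total_reverse_rate_bound (S d : ℕ) (hS : 2 ≤ S) (hd : 1 ≤ d) (m : Fin S)
    (q0 : (Fin d → Fin S) → ℝ) (hq0 : ∀ x, 0 ≤ q0 x)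
    (hq0sum : ∑ x : Fin d → Fin S, q0 x = 1) :
    ∀ t : ℝ, 0 < t → ∀ x : Fin d → Fin S,
      (∑ j ∈ Finset.univ.filter (fun j : Fin d => x j = m),
          ∑ b ∈ Finset.univ.filter (fun b : Fin S => b ≠ m),
            fwd S d m q0 t (Function.update x j b))
        ≤ (nmask S d m x : ℝ) * (Real.exp (-t) / (1 - Real.exp (-t))) * fwd S d m q0 t x ∧
      (∑ j ∈ Finset.univ.filter (fun j : Fin d => x j = m),
          ∑ b ∈ Finset.univ.filter (fun b : Fin S => b ≠ m),
            fwd S d m q0 t (Function.update x j b))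
        ≤ ((nmask S d m x : ℝ) / t) * fwd S d m q0 t x := by
  intro t ht x
  rw [fwd_eq_productMarginal, nmask]
  constructor
  · exact absorbing_total_reverse_rate_bound_general (fun _ => absK_nonneg ht.le) hq0
      (fun _ => sum_absK_le_mul_absK_mask ht) x
  · rw [div_eq_mul_inv]
    exact absorbing_total_reverse_rate_bound_general (fun _ => absK_nonneg ht.le) hq0
      (fun _ => sum_absK_le_inv_mul_absK_mask ht) x
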